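/- (Hybrid consistency is preserved by the HPDR rule INDUCTION.) Suppose the hybrid configuration ⟨M ∣ R₀,…,R_N; R_rem; N⟩ is consistent, i + 1 ≤ N, and a frame R : Q → Val → Prop satisfies: for all q and σ, F_H(fun q' σ' => R_i q' σ' ∧ R q' σ') q σ implies R q σ. Then the hybrid configuration ⟨∅ ∣ R₀', …, R_N'; R_rem; N⟩ is consistent, where R_j' = fun q σ => R_j q σ ∧ R q σ for 1 ≤ j ≤ i + 1 and R_j' = R_j for j = 0 and i + 1 < j ≤ N. -/

import Mathlib

/-- The flow transition `σ →_{f,ψ} σ'`: there is a solution of the ODE `ẋ = f(x)`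
from `σ` to `σ'` along which `ψ` holds at every point after the start. -/
def FlowTrans {V : Type*} [Fintype V]
    (f : (V → ℝ) → (V → ℝ)) (ψ : (V → ℝ) → Prop) (σ σ' : V → ℝ) : Prop :=
  ∃ (t' : ℝ) (x : ℝ → V → ℝ), 0 ≤ t' ∧ x 0 = σ ∧ x t' = σ' ∧
    (∀ t ∈ Set.Icc (0 : ℝ) t', HasDerivAt x (f (x t)) t) ∧
    (∀ t ∈ Set.Ioc (0 : ℝ) t', ψ (x t))

/-- The continuous reachability predicate `⟨f, ψ⟩φ'` holds at `σ`. -/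
def CRP {V : Type*} [Fintype V]
    (f : (V → ℝ) → (V → ℝ)) (ψ : (V → ℝ) → Prop) (φ' : (V → ℝ) → Prop)
    (σ : V → ℝ) : Prop :=
  ∃ σ', FlowTrans f ψ σ σ' ∧ φ' σ'

/-- The jump transition `⟨q, σ₁⟩ →δ ⟨q', σ₂⟩`. -/
def Jump {Q V : Type*}
    (δ : Set (Q × ((V → ℝ) → Prop) × ((V → ℝ) → (V → ℝ) → Prop) × Q))
    (q : Q) (σ₁ : V → ℝ) (q' : Q) (σ₂ : V → ℝ) : Prop :=
  ∃ φ φc, (q, φ, φc, q') ∈ δ ∧ φ σ₁ ∧ φc σ₁ σ₂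

/-- The hybrid forward predicate transformer `F_H` of the HA `(Q, q₀, φ₀, Flow, Inv, δ)`. -/
def FH {Q V : Type*} [Fintype V] (q₀ : Q) (φ₀ : (V → ℝ) → Prop)
    (Flow : Q → (V → ℝ) → (V → ℝ)) (Inv : Q → (V → ℝ) → Prop)
    (δ : Set (Q × ((V → ℝ) → Prop) × ((V → ℝ) → (V → ℝ) → Prop) × Q))
    (R : Q → (V → ℝ) → Prop) : Q → (V → ℝ) → Prop :=
  fun q' σ₂ => (q' = q₀ ∧ φ₀ σ₂) ∨
    ∃ q φ φc σ₁, (q, φ, φc, q') ∈ δ ∧ R q σ₁ ∧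
      CRP (Flow q) (Inv q) (fun σI => φ σI ∧ φc σI σ₂) σ₁

/-- The continuous forward predicate transformer `F_cont`. -/
def Fcont {Q V : Type*} [Fintype V]
    (Flow : Q → (V → ℝ) → (V → ℝ)) (Inv : Q → (V → ℝ) → Prop)
    (R : Q → (V → ℝ) → Prop) : Q → (V → ℝ) → Prop :=
  fun q' σ₂ => ∃ σ₁, R q' σ₁ ∧ FlowTrans (Flow q') (Inv q') σ₁ σ₂

/-- Consistency of an HPDR hybrid configuration `⟨M ∣ R₀,…,R_N; R_rem; N⟩`.
Frames are given as `R : ℕ → Q → (V → ℝ) → Prop` (only indices `≤ N` matter)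
together with the remainder frame `Rrem`.  The trace `M` is a list of triples
`(σ, q, ι)` where `ι : Option ℕ`: `some i` is the level `i` and `none` is `rem`. -/
structure HConsistent {Q V : Type*} [Fintype V] (q₀ : Q) (φ₀ : (V → ℝ) → Prop)
    (Flow : Q → (V → ℝ) → (V → ℝ)) (Inv : Q → (V → ℝ) → Prop)
    (δ : Set (Q × ((V → ℝ) → Prop) × ((V → ℝ) → (V → ℝ) → Prop) × Q))
    (φP : (V → ℝ) → Prop)
    (R : ℕ → Q → (V → ℝ) → Prop) (Rrem : Q → (V → ℝ) → Prop) (N : ℕ)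
    (M : List ((V → ℝ) × Q × Option ℕ)) : Prop where
  /-- (Con-A): `R₀` at `q₀` is the initial condition… -/
  conA₁ : ∀ σ, R 0 q₀ σ ↔ φ₀ σ
  /-- (Con-A): …and is `False` at other locations. -/
  conA₂ : ∀ q, q ≠ q₀ → ∀ σ, ¬ R 0 q σ
  /-- (Con-B-1): the frames are increasing. -/
  conB₁ : ∀ i, i < N → ∀ q σ, R i q σ → R (i + 1) q σ
  /-- (Con-B-2): the last frame is below the remainder frame. -/
  conB₂ : ∀ q σ, R N q σ → Rrem q σ
  /-- (Con-C): frames below `N` are safe. -/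
  conC : ∀ i, i < N → ∀ q σ, R i q σ → φP σ
  /-- (Con-D-1): frames are closed under `F_H`. -/
  conD₁ : ∀ i, i < N → ∀ q σ, FH q₀ φ₀ Flow Inv δ (R i) q σ → R (i + 1) q σ
  /-- (Con-D-2): the remainder frame is closed under `F_cont` from `R_N`. -/
  conD₂ : ∀ q σ, Fcont Flow Inv (R N) q σ → Rrem q σ
  /-- (Con-E): `rem`-level trace entries are in `R_rem` and violate safety. -/
  conE : ∀ σ q, (σ, q, (none : Option ℕ)) ∈ M → Rrem q σ ∧ ¬ φP σ
  /-- (Con-F-1): consecutive trace entries at levels `i`, `i+1` are connected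
  by a flow transition followed by a jump transition. -/
  conF₁ : ∀ k i (σ₁ : V → ℝ) (q₁ : Q) (σ₂ : V → ℝ) (q₂ : Q), i < N →
    M[k]? = some (σ₁, q₁, some i) → M[k + 1]? = some (σ₂, q₂, some (i + 1)) →
    ∃ φ φc, (q₁, φ, φc, q₂) ∈ δ ∧ R i q₁ σ₁ ∧
      CRP (Flow q₁) (Inv q₁) (fun σI => φ σI ∧ φc σI σ₂) σ₁
  /-- (Con-F-2): consecutive trace entries at levels `N`, `rem` are connected
  by a flow transition. -/
  conF₂ : ∀ k (σ₁ : V → ℝ) (q₁ : Q) (σ₂ : V → ℝ) (q₂ : Q),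
    M[k]? = some (σ₁, q₁, some N) → M[k + 1]? = some (σ₂, q₂, (none : Option ℕ)) →
    q₁ = q₂ ∧ R N q₁ σ₁ ∧ FlowTrans (Flow q₁) (Inv q₁) σ₁ σ₂

/-! Frame `0` contains only initial states, which lie in `Rg` because `F_H` always produces them.
Hence for `j ≤ i` the strengthened `j`-th frame lies in `R i ⊓ Rg`, and monotonicity of `F_H` turns
the inductiveness of `Rg` relative to `R i` into closure of the strengthened frames under `F_H`.
Apart from (Con-A) and (Con-B-1), the remaining conditions on frames only bound them
from above, and strengthening makes them smaller. -/

section StrengthenFrames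

variable {α : Type*} [SemilatticeInf α] {R : ℕ → α} {P : α} {n j : ℕ}

/-- The frame sequence produced by the INDUCTION rule: `P` is conjoined to the frames at levels
`1, …, n`. Frames form an arbitrary meet-semilattice here; for predicates `⊓` is conjunction. -/
def strengthenFrames (R : ℕ → α) (P : α) (n : ℕ) : ℕ → α :=
  fun j => if 1 ≤ j ∧ j ≤ n then R j ⊓ P else R j

theorem strengthenFrames_zero : strengthenFrames R P n 0 = R 0 :=
  if_neg fun h => Nat.not_succ_le_zero 0 h.1

theorem strengthenFrames_le : strengthenFrames R P n j ≤ R j := by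
  unfold strengthenFrames
  split_ifs
  exacts [inf_le_left, le_rfl]

theorem strengthenFrames_le_of_le (hzero : R 0 ≤ P) (hj : j ≤ n) :
    strengthenFrames R P n j ≤ P := by
  rcases Nat.eq_zero_or_pos j with rfl | hpos
  · exact strengthenFrames_zero.trans_le hzero
  · exact (if_pos ⟨hpos, hj⟩).trans_le inf_le_right

theorem le_strengthenFrames {a : α} (hR : a ≤ R j) (hP : j ≤ n → a ≤ P) :
    a ≤ strengthenFrames R P n j := by
  unfold strengthenFrames
  split_ifs with hj
  exacts [le_inf hR (hP hj.2), hR]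

theorem strengthenFrames_le_succ (hzero : R 0 ≤ P) (hR : R j ≤ R (j + 1)) :
    strengthenFrames R P n j ≤ strengthenFrames R P n (j + 1) :=
  le_strengthenFrames (strengthenFrames_le.trans hR) fun hj =>
    strengthenFrames_le_of_le hzero (Nat.le_of_succ_le hj)

theorem map_strengthenFrames_le_succ {F : α → α} {i : ℕ} (hF : Monotone F)
    (hzero : R 0 ≤ P) (hind : F (R i ⊓ P) ≤ P) (hR : j ≤ i → R j ≤ R i)
    (hstep : F (R j) ≤ R (j + 1)) :
    F (strengthenFrames R P (i + 1) j) ≤ strengthenFrames R P (i + 1) (j + 1) := by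
  refine le_strengthenFrames ((hF strengthenFrames_le).trans hstep) fun hj => ?_
  have hji : j ≤ i := Nat.le_of_succ_le_succ hj
  have hle : strengthenFrames R P (i + 1) j ≤ R i ⊓ P :=
    le_inf (strengthenFrames_le.trans (hR hji))
      (strengthenFrames_le_of_le hzero (Nat.le_succ_of_le hji))
  exact (hF hle).trans hind

end StrengthenFrames

section Consistency

variable {Q V : Type*} [Fintype V] {q₀ : Q} {φ₀ : (V → ℝ) → Prop}
  {Flow : Q → (V → ℝ) → (V → ℝ)} {Inv : Q → (V → ℝ) → Prop}
  {δ : Set (Q × ((V → ℝ) → Prop) × ((V → ℝ) → (V → ℝ) → Prop) × Q)}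
  {φP : (V → ℝ) → Prop} {R R' : ℕ → Q → (V → ℝ) → Prop} {Rrem : Q → (V → ℝ) → Prop}
  {N : ℕ} {M : List ((V → ℝ) × Q × Option ℕ)}

theorem monotone_FH : Monotone (FH q₀ φ₀ Flow Inv δ) := by
  rintro A B hAB q' σ₂ (hinit | ⟨q, φ, φc, σ₁, hδ, hA, hreach⟩)
  · exact Or.inl hinit
  · exact Or.inr ⟨q, φ, φc, σ₁, hδ, hAB q σ₁ hA, hreach⟩

theorem monotone_Fcont : Monotone (Fcont Flow Inv) := by
  rintro A B hAB q σ₂ ⟨σ₁, hA, hflow⟩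
  exact ⟨σ₁, hAB q σ₁ hA, hflow⟩

namespace HConsistent

theorem frame_zero_le_FH (h : HConsistent q₀ φ₀ Flow Inv δ φP R Rrem N M)
    (S : Q → (V → ℝ) → Prop) : R 0 ≤ FH q₀ φ₀ Flow Inv δ S := by
  intro q σ hσ
  obtain rfl : q = q₀ := by_contra fun hq => h.conA₂ q hq σ hσ
  exact Or.inl ⟨rfl, (h.conA₁ σ).1 hσ⟩

theorem monotoneOn_frames (h : HConsistent q₀ φ₀ Flow Inv δ φP R Rrem N M) :
    MonotoneOn R (Set.Iic N) :=
  monotoneOn_of_le_add_one Set.ordConnected_Iic fun j _ _ hj => h.conB₁ j hj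

theorem nil_of_frames_le (h : HConsistent q₀ φ₀ Flow Inv δ φP R Rrem N M)
    (hzero : R' 0 = R 0) (hle : ∀ j ≤ N, R' j ≤ R j)
    (hmono : ∀ j < N, R' j ≤ R' (j + 1))
    (hstep : ∀ j < N, FH q₀ φ₀ Flow Inv δ (R' j) ≤ R' (j + 1)) :
    HConsistent q₀ φ₀ Flow Inv δ φP R' Rrem N [] where
  conA₁ := hzero ▸ h.conA₁
  conA₂ := hzero ▸ h.conA₂
  conB₁ := hmono
  conB₂ := (hle N le_rfl).trans h.conB₂
  conC j hj q σ hσ := h.conC j hj q σ (hle j hj.le q σ hσ)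
  conD₁ := hstep
  conD₂ := (monotone_Fcont (hle N le_rfl)).trans h.conD₂
  conE := by simp
  conF₁ := by simp
  conF₂ := by simp

end HConsistent

end Consistency

/-- Hybrid consistency is preserved by the HPDR rule INDUCTION. -/
theorem hconsistent_induction {Q V : Type*} [Fintype V]
    (q₀ : Q) (φ₀ : (V → ℝ) → Prop)
    (Flow : Q → (V → ℝ) → (V → ℝ)) (Inv : Q → (V → ℝ) → Prop)
    (δ : Set (Q × ((V → ℝ) → Prop) × ((V → ℝ) → (V → ℝ) → Prop) × Q))
    (φP : (V → ℝ) → Prop)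
    (R : ℕ → Q → (V → ℝ) → Prop) (Rrem : Q → (V → ℝ) → Prop) (N i : ℕ)
    (M : List ((V → ℝ) × Q × Option ℕ))
    (Rg : Q → (V → ℝ) → Prop)
    (hcons : HConsistent q₀ φ₀ Flow Inv δ φP R Rrem N M)
    (hiN : i + 1 ≤ N)
    (hind : ∀ q σ,
      FH q₀ φ₀ Flow Inv δ (fun q' σ' => R i q' σ' ∧ Rg q' σ') q σ → Rg q σ) :
    HConsistent q₀ φ₀ Flow Inv δ φP
      (fun j => if 1 ≤ j ∧ j ≤ i + 1 then (fun q σ => R j q σ ∧ Rg q σ) else R j)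
      Rrem N ([] : List ((V → ℝ) × Q × Option ℕ)) := by
  have hzero : R 0 ≤ Rg := (hcons.frame_zero_le_FH _).trans hind
  refine hcons.nil_of_frames_le (R' := strengthenFrames R Rg (i + 1)) strengthenFrames_zero
    (fun _ _ => strengthenFrames_le)
    (fun j hj => strengthenFrames_le_succ hzero (hcons.conB₁ j hj))
    (fun j hj => ?_)
  have hRi : j ≤ i → R j ≤ R i :=
    hcons.monotoneOn_frames hj.le (Nat.le_of_succ_le hiN)
  exact map_strengthenFrames_le_succ monotone_FH hzero hind hRi (hcons.conD₁ j hj)
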